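/- The fuel-indexed interpreter is correct with respect to the pretty-big-step semantics: for every fuel n ∈ ℕ, environment E, heap H, statement s, and output o, if run_stat n E H s = Some o then the semantic judgment E, H, s → o is derivable (and similarly run_expr n E H e = Some o implies E, H, e → o). -/

import Mathlib

/-!
Soundness of the interpreter is an induction on the fuel: each branch of the interpreter that returns
a result mirrors one chain of pretty-big-step rules. The rule for the construct evaluates the first
subterm (a judgment supplied by the induction hypothesis), and the intermediate extended term is then
reduced either by the rule that consumes a normal result or, on an error, by the `abort` rule.
Expressions do not depend on statements, so `runExpr_sound` is proved first and then used in
`runStat_sound`. Induction on the fuel rather than on the term is what handles loops, where the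
interpreter calls itself on the same `while` statement.

The one side condition not checked by the interpreter itself is freshness of the allocated location:
`lookup_freshLoc` shows that the maximum of the allocated locations plus one is outside the heap.
-/

set_option autoImplicit false

/-! ## Syntax of O'While

Terms are parameterized by a type `α` of annotations (e.g. `Unit` for plain
terms, or program points for annotated terms). -/

abbrev Var := String
abbrev FieldName := String
abbrev Loc := ℕ

/-- Values: primitive (boolean) constants or locations. -/
inductive Val : Type where
  | bool : Bool → Val
  | loc : Loc → Val
deriving DecidableEq

/-- Binary operators act on primitive (boolean) values. -/
abbrev Op := Bool → Bool → Bool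

/-- Expressions: constants, variables, binary operations, object creation and
field access. -/
inductive Expr (α : Type) : Type where
  | cst : α → Bool → Expr α
  | var : α → Var → Expr α
  | bin : α → Op → Expr α → Expr α → Expr α
  | obj : α → Expr α
  | fld : α → Expr α → FieldName → Expr α

/-- Statements: skip, sequence, conditional, loop, assignment, field
assignment and field deletion. -/
inductive Stat (α : Type) : Type where
  | skip : α → Stat α
  | seq : α → Stat α → Stat α → Stat α
  | ite : α → Expr α → Stat α → Stat α → Stat α
  | whileDo : α → Expr α → Stat α → Stat α
  | asgn : α → Var → Expr α → Stat α
  | fldAsgn : α → Expr α → FieldName → Expr α → Stat α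
  | del : α → Expr α → FieldName → Stat α

/-! ## Semantic domains

For the executable interpreter, environments, objects and heaps are
represented as association lists (lookup returns the most recent binding). -/

/-- Objects map fields to values. -/
abbrev ObjL : Type := List (FieldName × Val)
/-- Environments map variables to values. -/
abbrev EnvL : Type := List (Var × Val)
/-- Heaps map locations to objects. -/
abbrev HeapL : Type := List (Loc × ObjL)

/-- Results: a state `S`, a pair of a state and a value `S, v`, or an error
`S, err`. -/
inductive Res : Type where
  | st : EnvL → HeapL → Res
  | val : EnvL → HeapL → Val → Res
  | err : EnvL → HeapL → Res

/-! ## Extended terms (pretty-big-step) -/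

/-- Extended terms: plain statements and expressions, plus the intermediate
syntactic constructs of the pretty-big-step semantics, storing the results of
already-evaluated subterms. -/
inductive ExtTerm (α : Type) : Type where
  | stat : Stat α → ExtTerm α
  | expr : Expr α → ExtTerm α
  | seq1 : Res → Stat α → ExtTerm α
  | if1 : Res → Stat α → Stat α → ExtTerm α
  | while1 : Res → α → Expr α → Stat α → ExtTerm α
  | while2 : Res → α → Expr α → Stat α → ExtTerm α
  | asgn1 : Var → Res → ExtTerm α
  | fldAsgn1 : Res → FieldName → Expr α → ExtTerm α
  | fldAsgn2 : Loc → FieldName → Res → ExtTerm α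
  | del1 : Res → FieldName → ExtTerm α
  | bin1 : Op → Res → Expr α → ExtTerm α
  | bin2 : Op → Val → Res → ExtTerm α
  | fld1 : Res → FieldName → ExtTerm α

def Res.errOf : Res → Option Res
  | .err E H => some (.err E H)
  | _ => none

/-- The abort function: it is defined (at least) on every extended term
containing a subterm equal to `S, err`, and propagates the error. -/
def abortFn {α : Type} : ExtTerm α → Option Res
  | .seq1 r _ => r.errOf
  | .if1 r _ _ => r.errOf
  | .while1 r _ _ _ => r.errOf
  | .while2 r _ _ _ => r.errOf
  | .asgn1 _ r => r.errOf
  | .fldAsgn1 r _ _ => r.errOf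
  | .fldAsgn2 _ _ r => r.errOf
  | .del1 r _ => r.errOf
  | .bin1 _ r _ => r.errOf
  | .bin2 _ _ r => r.errOf
  | .fld1 r _ => r.errOf
  | _ => none

/-! ## Traces -/

/-- Names of the rules of the pretty-big-step semantics. -/
inductive RuleName : Type where
  | skip | seq | seq1 | if_ | ifTrue | ifFalse
  | while_ | whileTrue1 | whileTrue2 | whileFalse
  | asg | asg1 | fldAsg | fldAsg1 | fldAsg2 | del | del1
  | cst | var | bin | bin1 | bin2 | obj | fld | fld1 | abort
deriving DecidableEq

/-- Decorations of rule names in traces: `i` marks entering the rule, `o`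
marks exiting it. -/
inductive Dir : Type where
  | i | o
deriving DecidableEq

/-- Partial traces: lists of decorated rule names. -/
abbrev Trace : Type := List (RuleName × Dir)

/-- Trace obtained when entering rule `n`. -/
def tin (n : RuleName) (τ : Trace) : Trace := τ ++ [(n, .i)]
/-- Trace obtained when exiting rule `n`. -/
def tout (n : RuleName) (τ : Trace) : Trace := τ ++ [(n, .o)]
/-- Trace produced by an axiom rule `n`: enter and exit. -/
def tax (n : RuleName) (τ : Trace) : Trace := τ ++ [(n, .i), (n, .o)]

/-! ## The plain pretty-big-step semantics

`Red E H t r` is the reduction `S, t → r` of Figure 3. -/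
inductive Red {α : Type} : EnvL → HeapL → ExtTerm α → Res → Prop where
  | skip : ∀ (E : EnvL) (H : HeapL) (a : α),
      Red (E) (H) (.stat (.skip a)) (.st E H)
  | seq : ∀ (E : EnvL) (H : HeapL) (a : α)
      (s₁ s₂ : Stat α) (r : Res)
      (r' : Res),
      Red (E) (H) (.stat s₁) (r) →
      Red (E) (H) (.seq1 r s₂) (r') →
      Red (E) (H) (.stat (.seq a s₁ s₂)) (r')
  | seq1 : ∀ (E : EnvL) (H : HeapL)
      (E' : EnvL) (H' : HeapL) (s : Stat α) (r : Res),
      Red (E') (H') (.stat s) (r) →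
      Red (E) (H) (.seq1 (.st E' H') s) (r)
  | if_ : ∀ (E : EnvL) (H : HeapL) (a : α)
      (e : Expr α) (s₁ s₂ : Stat α) (r : Res)
      (r' : Res),
      Red (E) (H) (.expr e) (r) →
      Red (E) (H) (.if1 r s₁ s₂) (r') →
      Red (E) (H) (.stat (.ite a e s₁ s₂)) (r')
  | ifTrue : ∀ (E : EnvL) (H : HeapL)
      (E' : EnvL) (H' : HeapL) (s₁ s₂ : Stat α) (r : Res),
      Red (E') (H') (.stat s₁) (r) →
      Red (E) (H) (.if1 (.val E' H' (.bool true)) s₁ s₂)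
        (r)
  | ifFalse : ∀ (E : EnvL) (H : HeapL)
      (E' : EnvL) (H' : HeapL) (s₁ s₂ : Stat α) (r : Res),
      Red (E') (H') (.stat s₂) (r) →
      Red (E) (H) (.if1 (.val E' H' (.bool false)) s₁ s₂)
        (r)
  | while_ : ∀ (E : EnvL) (H : HeapL) (a : α)
      (e : Expr α) (s : Stat α) (r : Res)
      (r' : Res),
      Red (E) (H) (.expr e) (r) →
      Red (E) (H) (.while1 r a e s) (r') →
      Red (E) (H) (.stat (.whileDo a e s)) (r')
  | whileTrue1 : ∀ (E : EnvL) (H : HeapL)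
      (E' : EnvL) (H' : HeapL) (a : α) (e : Expr α) (s : Stat α)
      (r : Res)
      (r' : Res),
      Red (E') (H') (.stat s) (r) →
      Red (E') (H') (.while2 r a e s) (r') →
      Red (E) (H) (.while1 (.val E' H' (.bool true)) a e s)
        (r')
  | whileTrue2 : ∀ (E : EnvL) (H : HeapL)
      (E' : EnvL) (H' : HeapL) (a : α) (e : Expr α) (s : Stat α)
      (r : Res),
      Red (E') (H') (.stat (.whileDo a e s)) (r) →
      Red (E) (H) (.while2 (.st E' H') a e s) (r)
  | whileFalse : ∀ (E : EnvL) (H : HeapL)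
      (E' : EnvL) (H' : HeapL) (a : α) (e : Expr α) (s : Stat α),
      Red (E) (H) (.while1 (.val E' H' (.bool false)) a e s)
        (.st E' H')
  | asg : ∀ (E : EnvL) (H : HeapL) (a : α)
      (x : Var) (e : Expr α) (r : Res)
      (r' : Res),
      Red (E) (H) (.expr e) (r) →
      Red (E) (H) (.asgn1 x r) (r') →
      Red (E) (H) (.stat (.asgn a x e)) (r')
  | asg1 : ∀ (E₀ : EnvL) (H₀ : HeapL)
      (E : EnvL) (H : HeapL) (x : Var) (v : Val),
      Red (E₀) (H₀) (.asgn1 x (.val E H v))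
        (.st ((x, v) :: E) H)
  | fldAsg : ∀ (E : EnvL) (H : HeapL) (a : α)
      (e₁ : Expr α) (f : FieldName) (e₂ : Expr α)
      (r : Res)
      (r' : Res),
      Red (E) (H) (.expr e₁) (r) →
      Red (E) (H) (.fldAsgn1 r f e₂) (r') →
      Red (E) (H) (.stat (.fldAsgn a e₁ f e₂)) (r')
  | fldAsg1 : ∀ (E : EnvL) (H : HeapL)
      (E' : EnvL) (H' : HeapL) (l : Loc) (f : FieldName) (e : Expr α)
      (r : Res)
      (r' : Res),
      Red (E') (H') (.expr e) (r) →
      Red (E') (H') (.fldAsgn2 l f r) (r') →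
      Red (E) (H) (.fldAsgn1 (.val E' H' (.loc l)) f e)
        (r')
  | fldAsg2 : ∀ (E₀ : EnvL) (H₀ : HeapL)
      (E : EnvL) (H : HeapL) (v : Val) (l : Loc) (f : FieldName) (o : ObjL),
      H.lookup l = some o →
      Red (E₀) (H₀) (.fldAsgn2 l f (.val E H v))
        (.st E ((l, (f, v) :: o) :: H))
  | del : ∀ (E : EnvL) (H : HeapL) (a : α)
      (e : Expr α) (f : FieldName)
      (r : Res)
      (r' : Res),
      Red (E) (H) (.expr e) (r) →
      Red (E) (H) (.del1 r f) (r') →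
      Red (E) (H) (.stat (.del a e f)) (r')
  | del1 : ∀ (E₀ : EnvL) (H₀ : HeapL)
      (E : EnvL) (H : HeapL) (l : Loc) (f : FieldName) (o : ObjL),
      H.lookup l = some o →
      (o.lookup f).isSome →
      Red (E₀) (H₀) (.del1 (.val E H (.loc l)) f)
        (.st E ((l, o.filter (fun q => q.1 != f)) :: H))
  | cst : ∀ (E : EnvL) (H : HeapL)
      (a : α) (c : Bool),
      Red (E) (H) (.expr (.cst a c)) (.val E H (.bool c))
  | var : ∀ (E : EnvL) (H : HeapL)
      (a : α) (x : Var) (v : Val),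
      E.lookup x = some v →
      Red (E) (H) (.expr (.var a x))
        (.val E H v)
  | bin : ∀ (E : EnvL) (H : HeapL)
      (a : α) (op : Op) (e₁ e₂ : Expr α)
      (r : Res)
      (r' : Res),
      Red (E) (H) (.expr e₁) (r) →
      Red (E) (H) (.bin1 op r e₂) (r') →
      Red (E) (H) (.expr (.bin a op e₁ e₂)) (r')
  | bin1 : ∀ (E : EnvL) (H : HeapL)
      (E' : EnvL) (H' : HeapL) (op : Op) (v₁ : Val) (e₂ : Expr α)
      (r : Res)
      (r' : Res),
      Red (E') (H') (.expr e₂) (r) →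
      Red (E') (H') (.bin2 op v₁ r) (r') →
      Red (E) (H) (.bin1 op (.val E' H' v₁) e₂) (r')
  | bin2 : ∀ (E₀ : EnvL) (H₀ : HeapL)
      (E : EnvL) (H : HeapL) (op : Op) (b₁ b₂ : Bool),
      Red (E₀) (H₀) (.bin2 op (.bool b₁) (.val E H (.bool b₂)))
        (.val E H (.bool (op b₁ b₂)))
  | obj : ∀ (E : EnvL) (H : HeapL)
      (a : α) (l : Loc),
      H.lookup l = none →
      Red (E) (H) (.expr (.obj a))
        (.val E ((l, ([] : ObjL)) :: H) (.loc l))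
  | fld : ∀ (E : EnvL) (H : HeapL)
      (a : α) (e : Expr α) (f : FieldName)
      (r : Res)
      (r' : Res),
      Red (E) (H) (.expr e) (r) →
      Red (E) (H) (.fld1 r f) (r') →
      Red (E) (H) (.expr (.fld a e f)) (r')
  | fld1 : ∀ (E₀ : EnvL) (H₀ : HeapL)
      (E : EnvL) (H : HeapL) (l : Loc) (f : FieldName) (o : ObjL) (v : Val),
      H.lookup l = some o →
      o.lookup f = some v →
      Red (E₀) (H₀) (.fld1 (.val E H (.loc l)) f)
        (.val E H v)
  | abort : ∀ (E : EnvL) (H : HeapL)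
      (t : ExtTerm α) (r : Res),
      abortFn t = some r →
      Red (E) (H) (t) (r)


/-! ## The fuel-indexed interpreter -/

/-- A fresh location, not in the domain of the heap. -/
def freshLoc (H : HeapL) : Loc := (H.map Prod.fst).foldr max 0 + 1

/-- The interpreter for expressions: the first argument is the fuel,
decremented at each recursive call; `none` is returned when it reaches `0`. -/
def runExpr : ℕ → EnvL → HeapL → Expr Unit → Option Res
  | 0, _, _, _ => none
  | Nat.succ n, E, H, e =>
    match e with
    | .cst _ c => some (.val E H (.bool c))
    | .var _ x => (E.lookup x).map (fun v => .val E H v)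
    | .bin _ op e₁ e₂ =>
      match runExpr n E H e₁ with
      | some (.val E₁ H₁ v₁) =>
        (match runExpr n E₁ H₁ e₂ with
         | some (.val E₂ H₂ v₂) =>
           (match v₁, v₂ with
            | .bool b₁, .bool b₂ => some (.val E₂ H₂ (.bool (op b₁ b₂)))
            | _, _ => none)
         | some (.err E₂ H₂) => some (.err E₂ H₂)
         | _ => none)
      | some (.err E₁ H₁) => some (.err E₁ H₁)
      | _ => none
    | .obj _ => some (.val E ((freshLoc H, ([] : ObjL)) :: H) (.loc (freshLoc H)))
    | .fld _ e₀ f =>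
      match runExpr n E H e₀ with
      | some (.val E' H' (.loc l)) =>
        (match H'.lookup l with
         | some ob =>
           (match ob.lookup f with
            | some v => some (.val E' H' v)
            | none => none)
         | none => none)
      | some (.err E' H') => some (.err E' H')
      | _ => none

/-- The interpreter for statements. -/
def runStat : ℕ → EnvL → HeapL → Stat Unit → Option Res
  | 0, _, _, _ => none
  | Nat.succ n, E, H, s =>
    match s with
    | .skip _ => some (.st E H)
    | .seq _ s₁ s₂ =>
      match runStat n E H s₁ with
      | some (.st E₁ H₁) => runStat n E₁ H₁ s₂
      | some (.err E₁ H₁) => some (.err E₁ H₁)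
      | _ => none
    | .ite _ e s₁ s₂ =>
      match runExpr n E H e with
      | some (.val E' H' (.bool true)) => runStat n E' H' s₁
      | some (.val E' H' (.bool false)) => runStat n E' H' s₂
      | some (.err E' H') => some (.err E' H')
      | _ => none
    | .whileDo a e s₀ =>
      match runExpr n E H e with
      | some (.val E' H' (.bool true)) =>
        (match runStat n E' H' s₀ with
         | some (.st E'' H'') => runStat n E'' H'' (.whileDo a e s₀)
         | some (.err E'' H'') => some (.err E'' H'')
         | _ => none)
      | some (.val E' H' (.bool false)) => some (.st E' H')
      | some (.err E' H') => some (.err E' H')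
      | _ => none
    | .asgn _ x e =>
      match runExpr n E H e with
      | some (.val E' H' v) => some (.st ((x, v) :: E') H')
      | some (.err E' H') => some (.err E' H')
      | _ => none
    | .fldAsgn _ e₁ f e₂ =>
      match runExpr n E H e₁ with
      | some (.val E₁ H₁ (.loc l)) =>
        (match runExpr n E₁ H₁ e₂ with
         | some (.val E₂ H₂ v) =>
           (match H₂.lookup l with
            | some ob => some (.st E₂ ((l, (f, v) :: ob) :: H₂))
            | none => none)
         | some (.err E₂ H₂) => some (.err E₂ H₂)
         | _ => none)
      | some (.err E₁ H₁) => some (.err E₁ H₁)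
      | _ => none
    | .del _ e f =>
      match runExpr n E H e with
      | some (.val E' H' (.loc l)) =>
        (match H'.lookup l with
         | some ob =>
           if (ob.lookup f).isSome then
             some (.st E' ((l, ob.filter (fun q => q.1 != f)) :: H'))
           else none
         | none => none)
      | some (.err E' H') => some (.err E' H')
      | _ => none

/-! ### Freshness of allocated locations and soundness -/

/-- `freshLoc` bounds every allocated location strictly. -/
theorem lt_freshLoc {H : HeapL} {p : Loc × ObjL} (hp : p ∈ H) : p.1 < freshLoc H := by
  induction H with
  | nil => simp at hp
  | cons q H ih =>
    simp only [freshLoc, List.map_cons, List.foldr_cons] at ih ⊢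
    rcases List.mem_cons.1 hp with rfl | hp
    · exact Nat.lt_succ_of_le (le_max_left _ _)
    · exact (ih hp).trans_le (Nat.succ_le_succ (le_max_right _ _))

theorem lookup_freshLoc (H : HeapL) : H.lookup (freshLoc H) = none := by
  rw [List.lookup_eq_none_iff]
  intro p hp
  exact bne_iff_ne.2 (lt_freshLoc hp).ne'

theorem runExpr_sound (n : ℕ) (E : EnvL) (H : HeapL) (e : Expr Unit) (o : Res)
    (h : runExpr n E H e = some o) : Red E H (.expr e) o := by
  induction n generalizing E H e o with
  | zero => simp [runExpr] at h
  | succ n ih =>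
    cases e with
    | cst a c =>
      obtain rfl : _ = o := by simpa [runExpr] using h
      exact .cst ..
    | var a x =>
      obtain ⟨v, hv, rfl⟩ : ∃ v, E.lookup x = some v ∧ _ = o := by
        simpa only [runExpr, Option.map_eq_some_iff] using h
      exact .var _ _ _ _ _ hv
    | obj a =>
      obtain rfl : _ = o := by simpa [runExpr] using h
      exact .obj _ _ _ _ (lookup_freshLoc H)
    | bin a op e₁ e₂ =>
      simp only [runExpr] at h
      split at h
      · rename_i E₁ H₁ v₁ h₁
        refine .bin _ _ _ _ _ _ _ _ (ih _ _ _ _ h₁) ?_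
        split at h
        · rename_i E₂ H₂ v₂ h₂
          refine .bin1 _ _ _ _ _ _ _ _ _ (ih _ _ _ _ h₂) ?_
          split at h
          · cases h
            exact .bin2 ..
          · cases h
        · rename_i h₂
          cases h
          exact .bin1 _ _ _ _ _ _ _ _ _ (ih _ _ _ _ h₂) (.abort _ _ _ _ rfl)
        · cases h
      · rename_i h₁
        cases h
        exact .bin _ _ _ _ _ _ _ _ (ih _ _ _ _ h₁) (.abort _ _ _ _ rfl)
      · cases h
    | fld a e f =>
      simp only [runExpr] at h
      split at h
      · rename_i h₁
        refine .fld _ _ _ _ _ _ _ (ih _ _ _ _ h₁) ?_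
        split at h
        · rename_i hob
          split at h
          · rename_i hv
            cases h
            exact .fld1 _ _ _ _ _ _ _ _ hob hv
          · cases h
        · cases h
      · rename_i h₁
        cases h
        exact .fld _ _ _ _ _ _ _ (ih _ _ _ _ h₁) (.abort _ _ _ _ rfl)
      · cases h

theorem runStat_sound (n : ℕ) (E : EnvL) (H : HeapL) (s : Stat Unit) (o : Res)
    (h : runStat n E H s = some o) : Red E H (.stat s) o := by
  induction n generalizing E H s o with
  | zero => simp [runStat] at h
  | succ n ih =>
    cases s with
    | skip a =>
      obtain rfl : _ = o := by simpa [runStat] using h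
      exact .skip ..
    | seq a s₁ s₂ =>
      simp only [runStat] at h
      split at h
      · rename_i h₁
        exact .seq _ _ _ _ _ _ _ (ih _ _ _ _ h₁) (.seq1 _ _ _ _ _ _ (ih _ _ _ _ h))
      · rename_i h₁
        cases h
        exact .seq _ _ _ _ _ _ _ (ih _ _ _ _ h₁) (.abort _ _ _ _ rfl)
      · cases h
    | ite a e s₁ s₂ =>
      simp only [runStat] at h
      split at h
      · rename_i he
        exact .if_ _ _ _ _ _ _ _ _ (runExpr_sound _ _ _ _ _ he)
          (.ifTrue _ _ _ _ _ _ _ (ih _ _ _ _ h))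
      · rename_i he
        exact .if_ _ _ _ _ _ _ _ _ (runExpr_sound _ _ _ _ _ he)
          (.ifFalse _ _ _ _ _ _ _ (ih _ _ _ _ h))
      · rename_i he
        cases h
        exact .if_ _ _ _ _ _ _ _ _ (runExpr_sound _ _ _ _ _ he) (.abort _ _ _ _ rfl)
      · cases h
    | whileDo a e s =>
      simp only [runStat] at h
      split at h
      · rename_i he
        refine .while_ _ _ _ _ _ _ _ (runExpr_sound _ _ _ _ _ he) ?_
        split at h
        · rename_i hs
          exact .whileTrue1 _ _ _ _ _ _ _ _ _ (ih _ _ _ _ hs)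
            (.whileTrue2 _ _ _ _ _ _ _ _ (ih _ _ _ _ h))
        · rename_i hs
          cases h
          exact .whileTrue1 _ _ _ _ _ _ _ _ _ (ih _ _ _ _ hs) (.abort _ _ _ _ rfl)
        · cases h
      · rename_i he
        cases h
        exact .while_ _ _ _ _ _ _ _ (runExpr_sound _ _ _ _ _ he) (.whileFalse ..)
      · rename_i he
        cases h
        exact .while_ _ _ _ _ _ _ _ (runExpr_sound _ _ _ _ _ he) (.abort _ _ _ _ rfl)
      · cases h
    | asgn a x e =>
      simp only [runStat] at h
      split at h
      · rename_i he
        cases h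
        exact .asg _ _ _ _ _ _ _ (runExpr_sound _ _ _ _ _ he) (.asg1 ..)
      · rename_i he
        cases h
        exact .asg _ _ _ _ _ _ _ (runExpr_sound _ _ _ _ _ he) (.abort _ _ _ _ rfl)
      · cases h
    | fldAsgn a e₁ f e₂ =>
      simp only [runStat] at h
      split at h
      · rename_i h₁
        refine .fldAsg _ _ _ _ _ _ _ _ (runExpr_sound _ _ _ _ _ h₁) ?_
        split at h
        · rename_i h₂
          refine .fldAsg1 _ _ _ _ _ _ _ _ _ (runExpr_sound _ _ _ _ _ h₂) ?_
          split at h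
          · rename_i hob
            cases h
            exact .fldAsg2 _ _ _ _ _ _ _ _ hob
          · cases h
        · rename_i h₂
          cases h
          exact .fldAsg1 _ _ _ _ _ _ _ _ _ (runExpr_sound _ _ _ _ _ h₂) (.abort _ _ _ _ rfl)
        · cases h
      · rename_i h₁
        cases h
        exact .fldAsg _ _ _ _ _ _ _ _ (runExpr_sound _ _ _ _ _ h₁) (.abort _ _ _ _ rfl)
      · cases h
    | del a e f =>
      simp only [runStat] at h
      split at h
      · rename_i he
        refine .del _ _ _ _ _ _ _ (runExpr_sound _ _ _ _ _ he) ?_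
        split at h
        · rename_i hob
          split at h
          · rename_i hf
            cases h
            exact .del1 _ _ _ _ _ _ _ hob hf
          · cases h
        · cases h
      · rename_i he
        cases h
        exact .del _ _ _ _ _ _ _ (runExpr_sound _ _ _ _ _ he) (.abort _ _ _ _ rfl)
      · cases h

/-! ## STATEMENT 5

The fuel-indexed interpreter is correct with respect to the pretty-big-step
semantics: for every fuel `n`, environment `E`, heap `H`, statement `s`
(resp. expression `e`) and output `o`, if `runStat n E H s = some o`
(resp. `runExpr n E H e = some o`) then the semantic judgment
`E, H, s → o` (resp. `E, H, e → o`) is derivable. -/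
theorem interpreter_correct :
    (∀ (n : ℕ) (E : EnvL) (H : HeapL) (s : Stat Unit) (o : Res),
        runStat n E H s = some o → Red E H (.stat s) o) ∧
    (∀ (n : ℕ) (E : EnvL) (H : HeapL) (e : Expr Unit) (o : Res),
        runExpr n E H e = some o → Red E H (.expr e) o) := by
  exact ⟨runStat_sound, runExpr_sound⟩
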